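/- Let p be a real number with 1 ≤ p < ∞. Let G : ℓ^m → ℓ^r be strictly causal, ℓ_p-stable and incrementally finite-gain ℓ_p-stable, and let K : ℓ^r → ℓ^m be causal. Since G∘K is strictly causal, the operator I − G K : y ↦ y − G(K y) is a bijection of ℓ^r with causal inverse. Then the closed-loop map Φ_{G,K} is ℓ_p-stable (i.e., for all v ∈ ℓ_p^r and d ∈ ℓ_p^m the closed-loop signals satisfy y ∈ ℓ_p^r and u ∈ ℓ_p^m) if and only if the operator K ∘ (I − G K)^{-1} is ℓ_p-stable (i.e., for every a ∈ ℓ_p^r, the unique y with y = G(K y) + a satisfies K y ∈ ℓ_p^m). -/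

import Mathlib

/-- Sequences with values in `ℝ^n` (with the Euclidean norm). -/
abbrev Traj (n : ℕ) : Type := ℕ → EuclideanSpace ℝ (Fin n)

/-- A causal operator on sequences. -/
def Causal {n m : ℕ} (A : Traj n → Traj m) : Prop :=
  ∀ (x x' : Traj n) (t : ℕ), (∀ s, s ≤ t → x s = x' s) → A x t = A x' t

/-- A strictly causal operator on sequences. -/
def StrictlyCausal {n m : ℕ} (A : Traj n → Traj m) : Prop :=
  ∀ (x x' : Traj n) (t : ℕ), (∀ s, s < t → x s = x' s) → A x t = A x' t

/-- Causal in the first argument, strictly causal in the second argument. -/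
def CausalSC {n q m : ℕ} (B : Traj n → Traj q → Traj m) : Prop :=
  ∀ (x x' : Traj n) (z z' : Traj q) (t : ℕ),
    (∀ s, s ≤ t → x s = x' s) → (∀ s, s < t → z s = z' s) → B x z t = B x' z' t

/-- Causal in both arguments. -/
def CausalCC {n q m : ℕ} (B : Traj n → Traj q → Traj m) : Prop :=
  ∀ (x x' : Traj n) (z z' : Traj q) (t : ℕ),
    (∀ s, s ≤ t → x s = x' s) → (∀ s, s ≤ t → z s = z' s) → B x z t = B x' z' t

/-- Strictly causal in both arguments. -/
def CausalSS {n q m : ℕ} (B : Traj n → Traj q → Traj m) : Prop :=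
  ∀ (x x' : Traj n) (z z' : Traj q) (t : ℕ),
    (∀ s, s < t → x s = x' s) → (∀ s, s < t → z s = z' s) → B x z t = B x' z' t

/-- Membership in `ℓ_p`: summability of `‖x t‖ ^ p`. -/
def InLp (p : ℝ) {E : Type*} [Norm E] (x : ℕ → E) : Prop :=
  Summable fun t => ‖x t‖ ^ p

/-- The `ℓ_p` norm `(∑ₜ ‖x t‖ ^ p) ^ (1/p)` of a sequence. -/
noncomputable def lpSeqNorm (p : ℝ) {E : Type*} [Norm E] (x : ℕ → E) : ℝ :=
  (∑' t, ‖x t‖ ^ p) ^ (1 / p)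

/-- The `ℝ^{r+m}`-valued sequence obtained by stacking `v` and `d`
(the norm of `(v t, d t)` is the Euclidean norm of the concatenated vector). -/
noncomputable def pairSeq {r m : ℕ} (v : Traj r) (d : Traj m) :
    ℕ → WithLp 2 (EuclideanSpace ℝ (Fin r) × EuclideanSpace ℝ (Fin m)) :=
  fun t => (WithLp.equiv 2 _).symm (v t, d t)

/-- An exponentially decaying sequence: `‖x t‖ ≤ k · α ^ t` with `k > 0`, `α ∈ (0,1)`. -/
def ExpDecay {E : Type*} [Norm E] (x : ℕ → E) : Prop :=
  ∃ k : ℝ, 0 < k ∧ ∃ α : ℝ, 0 < α ∧ α < 1 ∧ ∀ t, ‖x t‖ ≤ k * α ^ t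

/-!
Strict causality makes `y - G (K y) = a` a recursion in time that determines `y`.

The gain bound on `G` applies to `ℓ_p` inputs only. Truncation extends it: if `u - w ∈ ℓ_p`, then
by causality `G u - G w` agrees before time `t` with the difference of the responses to `u` and `w`
cut off at `t`, and the `ℓ_p` norm of that difference is at most `γ ‖u - w‖_p` whatever `t` is.
Hence `G u - G w ∈ ℓ_p` even when `u, w ∉ ℓ_p`.

For closed-loop signals `y = G u + v`, `u = K y + d`, this makes
`a = (G (K y + d) - G (K y)) + v` an `ℓ_p` sequence, and `y = G (K y) + a`: the disturbance `d` can
be moved to the output of the plant, where `K ∘ (I - G K)⁻¹` decides stability.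
-/

section Causality

variable {ι E F H : Type*} [Preorder ι]

/-- Causality of an operator on functions of a time `ι` with arbitrary values; `Causal` is the case
`ι = ℕ` with Euclidean values. -/
def IsCausal (A : (ι → E) → ι → F) : Prop :=
  ∀ x x' t, (∀ s ≤ t, x s = x' s) → A x t = A x' t

/-- Strict causality of an operator on functions of a time `ι` with arbitrary values;
`StrictlyCausal` is the case `ι = ℕ` with Euclidean values. -/
def IsStrictlyCausal (A : (ι → E) → ι → F) : Prop :=
  ∀ x x' t, (∀ s < t, x s = x' s) → A x t = A x' t

theorem IsStrictlyCausal.isCausal {A : (ι → E) → ι → F} (hA : IsStrictlyCausal A) : IsCausal A :=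
  fun x x' t h => hA x x' t fun s hs => h s hs.le

theorem IsStrictlyCausal.comp_isCausal {A : (ι → F) → ι → H} {B : (ι → E) → ι → F}
    (hA : IsStrictlyCausal A) (hB : IsCausal B) : IsStrictlyCausal (A ∘ B) :=
  fun x x' t h => hA _ _ t fun s hs => hB x x' s fun i hi => h i (hi.trans_lt hs)

theorem IsCausal.eqOn_indicator [Zero E] {A : (ι → E) → ι → F} (hA : IsCausal A) {S : Set ι}
    (hS : IsLowerSet S) (x : ι → E) : Set.EqOn (A (S.indicator x)) (A x) S :=
  fun _ ht => hA _ _ _ fun _ hs => Set.indicator_of_mem (hS hs ht) x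

variable [WellFoundedLT ι]

theorem IsStrictlyCausal.exists_fixedPoint [Nonempty E] {A : (ι → E) → ι → E}
    (hA : IsStrictlyCausal A) : ∃ y, A y = y := by
  classical
  let next (t : ι) (past : ∀ s, s < t → E) : E :=
    A (fun s => if hs : s < t then past s hs else Classical.arbitrary E) t
  refine ⟨wellFounded_lt.fix next, funext fun t => ?_⟩
  rw [wellFounded_lt.fix_eq next t]
  exact hA _ _ t fun _ hs => Eq.symm (dif_pos hs)

variable [AddGroup E] {A : (ι → E) → ι → E}

theorem IsStrictlyCausal.eq_of_sub_eq (hA : IsStrictlyCausal A) {y y' : ι → E} {t : ι}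
    (h : ∀ s ≤ t, (y - A y) s = (y' - A y') s) : y t = y' t := by
  induction t using WellFoundedLT.induction with
  | ind t ih =>
    have hAt : A y t = A y' t := hA y y' t fun s hs => ih s hs fun i hi => h i (hi.trans hs.le)
    simpa only [Pi.sub_apply, hAt, sub_left_inj] using h t le_rfl

theorem IsStrictlyCausal.bijective_id_sub (hA : IsStrictlyCausal A) :
    Function.Bijective fun y => y - A y := by
  refine ⟨fun y y' h => funext fun t => hA.eq_of_sub_eq fun s _ => congrFun h s, fun a => ?_⟩
  have hshift : IsStrictlyCausal fun y => a + A y :=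
    fun x x' t h => congrArg (a t + ·) (hA x x' t h)
  obtain ⟨y, hy⟩ := hshift.exists_fixedPoint
  exact ⟨y, sub_eq_iff_eq_add.mpr hy.symm⟩

theorem IsStrictlyCausal.isCausal_of_rightInverse (hA : IsStrictlyCausal A)
    {Ξ : (ι → E) → ι → E} (hΞ : Function.RightInverse Ξ fun y => y - A y) : IsCausal Ξ := by
  refine fun a a' t h => hA.eq_of_sub_eq fun s hs => ?_
  calc (Ξ a - A (Ξ a)) s = a s := congrFun (hΞ a) s
    _ = a' s := h s hs
    _ = (Ξ a' - A (Ξ a')) s := (congrFun (hΞ a') s).symm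

end Causality

section LpSequences

variable {E : Type*} [NormedAddCommGroup E] {p : ℝ} {x y : ℕ → E}

theorem inLp_iff_memℓp (hp : 0 < p) :
    InLp p x ↔ Memℓp (E := fun _ : ℕ => E) x (ENNReal.ofReal p) := by
  have htoReal : (ENNReal.ofReal p).toReal = p := ENNReal.toReal_ofReal hp.le
  rw [memℓp_gen_iff (htoReal.symm ▸ hp), htoReal, InLp]

theorem InLp.add (hp : 0 < p) (hx : InLp p x) (hy : InLp p y) : InLp p (x + y) :=
  (inLp_iff_memℓp hp).mpr (((inLp_iff_memℓp hp).mp hx).add ((inLp_iff_memℓp hp).mp hy))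

theorem InLp.sub (hp : 0 < p) (hx : InLp p x) (hy : InLp p y) : InLp p (x - y) :=
  (inLp_iff_memℓp hp).mpr (((inLp_iff_memℓp hp).mp hx).sub ((inLp_iff_memℓp hp).mp hy))

theorem inLp_of_finite_support (hp : p ≠ 0) (hx : x.support.Finite) : InLp p x := by
  refine summable_of_hasFiniteSupport (hx.subset fun t ht hxt => ht ?_)
  simp only [hxt, norm_zero, Real.zero_rpow hp]

theorem inLp_zero (hp : p ≠ 0) : InLp p (0 : ℕ → E) :=
  inLp_of_finite_support hp (by simp only [Function.support_zero, Set.finite_empty])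

theorem inLp_indicator (hp : p ≠ 0) {S : Set ℕ} (hS : S.Finite) (x : ℕ → E) :
    InLp p (S.indicator x) :=
  inLp_of_finite_support hp (hS.subset Set.support_indicator_subset)

theorem InLp.of_norm_le (hp : 0 ≤ p) (hy : InLp p y) (h : ∀ t, ‖x t‖ ≤ ‖y t‖) : InLp p x :=
  Summable.of_nonneg_of_le (fun _ => by positivity)
    (fun t => Real.rpow_le_rpow (norm_nonneg _) (h t) hp) hy

theorem lpSeqNorm_nonneg (p : ℝ) (x : ℕ → E) : 0 ≤ lpSeqNorm p x :=
  Real.rpow_nonneg (tsum_nonneg fun _ => by positivity) _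

theorem lpSeqNorm_rpow (hp : p ≠ 0) (x : ℕ → E) : lpSeqNorm p x ^ p = ∑' t, ‖x t‖ ^ p := by
  rw [lpSeqNorm, one_div, Real.rpow_inv_rpow (tsum_nonneg fun _ => by positivity) hp]

theorem lpSeqNorm_le_of_norm_le (hp : 0 ≤ p) (hy : InLp p y) (h : ∀ t, ‖x t‖ ≤ ‖y t‖) :
    lpSeqNorm p x ≤ lpSeqNorm p y := by
  refine Real.rpow_le_rpow (tsum_nonneg fun _ => by positivity) ?_ (by positivity)
  exact (hy.of_norm_le hp h).tsum_le_tsum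
    (fun t => Real.rpow_le_rpow (norm_nonneg _) (h t) hp) hy

theorem InLp.sum_le_lpSeqNorm_rpow (hp : p ≠ 0) (hx : InLp p x) (S : Finset ℕ) :
    ∑ t ∈ S, ‖x t‖ ^ p ≤ lpSeqNorm p x ^ p := by
  rw [lpSeqNorm_rpow hp]
  exact Summable.sum_le_tsum S (fun _ _ => by positivity) hx

end LpSequences

section Stability

variable {E F : Type*} [NormedAddCommGroup E] [NormedAddCommGroup F] {p : ℝ}
  {G : (ℕ → E) → ℕ → F} {K : (ℕ → F) → ℕ → E}

/-- `ℓ_p`-stability of an operator on sequences. -/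
def LpStable (p : ℝ) (A : (ℕ → E) → ℕ → F) : Prop :=
  ∀ x, InLp p x → InLp p (A x)

/-- Incremental finite-gain `ℓ_p`-stability. Since `lpSeqNorm` has a junk value off `ℓ_p`, the bound
says what it should only for an operator that is also `LpStable`. -/
def IncrFiniteGain (p : ℝ) (A : (ℕ → E) → ℕ → F) : Prop :=
  ∃ γ : ℝ, 0 ≤ γ ∧ ∀ x₁ x₂, InLp p x₁ → InLp p x₂ →
    lpSeqNorm p (A x₁ - A x₂) ≤ γ * lpSeqNorm p (x₁ - x₂)

/-- Preservation of `ℓ_p`-close pairs of sequences, neither of which has to be in `ℓ_p`. -/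
def PreservesLpDiff (p : ℝ) (A : (ℕ → E) → ℕ → F) : Prop :=
  ∀ x₁ x₂, InLp p (x₁ - x₂) → InLp p (A x₁ - A x₂)

/-- `ℓ_p`-stability of the closed-loop map `(v, d) ↦ (y, u)`, encoded through the loop equations
that define the map. -/
def ClosedLoopLpStable (p : ℝ) (G : (ℕ → E) → ℕ → F) (K : (ℕ → F) → ℕ → E) : Prop :=
  ∀ v d y u, y = G u + v → u = K y + d → InLp p v → InLp p d → InLp p y ∧ InLp p u

theorem IsCausal.preservesLpDiff (hp : 0 < p) (hG : IsCausal G) (hGstab : LpStable p G)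
    (hGgain : IncrFiniteGain p G) : PreservesLpDiff p G := by
  obtain ⟨γ, hγ, hgain⟩ := hGgain
  intro u w huw
  refine summable_of_sum_range_le (c := (γ * lpSeqNorm p (u - w)) ^ p)
    (fun _ => by positivity) fun t => ?_
  let trunc (x : ℕ → E) : ℕ → E := (Set.Iio t).indicator x
  have htrunc (x : ℕ → E) : InLp p (trunc x) := inLp_indicator hp.ne' (Set.finite_Iio t) x
  have hG_trunc (x : ℕ → E) {s : ℕ} (hs : s ∈ Finset.range t) : G (trunc x) s = G x s :=
    hG.eqOn_indicator (isLowerSet_Iio t) x (Finset.mem_range.mp hs)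
  have hnorm_trunc : lpSeqNorm p (trunc u - trunc w) ≤ lpSeqNorm p (u - w) := by
    rw [← Set.indicator_sub']
    exact lpSeqNorm_le_of_norm_le hp.le huw fun s => norm_indicator_le_norm_self _ s
  calc ∑ s ∈ Finset.range t, ‖(G u - G w) s‖ ^ p
      = ∑ s ∈ Finset.range t, ‖(G (trunc u) - G (trunc w)) s‖ ^ p :=
        Finset.sum_congr rfl fun s hs => by
          simp only [Pi.sub_apply, hG_trunc u hs, hG_trunc w hs]
    _ ≤ lpSeqNorm p (G (trunc u) - G (trunc w)) ^ p :=
        ((hGstab _ (htrunc u)).sub hp (hGstab _ (htrunc w))).sum_le_lpSeqNorm_rpow hp.ne' _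
    _ ≤ (γ * lpSeqNorm p (u - w)) ^ p := by
        refine Real.rpow_le_rpow (lpSeqNorm_nonneg p _) ?_ hp.le
        exact (hgain _ _ (htrunc u) (htrunc w)).trans (mul_le_mul_of_nonneg_left hnorm_trunc hγ)

theorem ClosedLoopLpStable.inLp_controller (hp : p ≠ 0) (h : ClosedLoopLpStable p G K)
    {a y : ℕ → F} (ha : InLp p a) (hy : y = G (K y) + a) : InLp p (K y) :=
  (h a 0 y (K y) hy (add_zero _).symm ha (inLp_zero hp)).2

theorem PreservesLpDiff.closedLoopLpStable (hp : 0 < p) (hGdiff : PreservesLpDiff p G)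
    (hGstab : LpStable p G)
    (hK : ∀ a, InLp p a → ∀ y, y = G (K y) + a → InLp p (K y)) : ClosedLoopLpStable p G K := by
  intro v d y u hy hu hv hd
  have hdiff : InLp p (G u - G (K y)) := hGdiff u (K y) (by rwa [hu, add_sub_cancel_left])
  have hKy : InLp p (K y) :=
    hK _ (hdiff.add hp hv) y (by rwa [← add_assoc, add_sub_cancel])
  have hu_mem : InLp p u := hu ▸ hKy.add hp hd
  exact ⟨hy ▸ (hGstab u hu_mem).add hp hv, hu_mem⟩

theorem statement9_general (hp : 0 < p) (hG : IsStrictlyCausal G) (hGstab : LpStable p G)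
    (hGgain : IncrFiniteGain p G) (hK : IsCausal K) :
    Function.Bijective (fun y => y - G (K y)) ∧
    (∀ Ξ, Function.RightInverse Ξ (fun y => y - G (K y)) → IsCausal Ξ) ∧
    (ClosedLoopLpStable p G K ↔ ∀ a, InLp p a → ∀ y, y = G (K y) + a → InLp p (K y)) := by
  have hGK : IsStrictlyCausal (G ∘ K) := hG.comp_isCausal hK
  have hGdiff : PreservesLpDiff p G := hG.isCausal.preservesLpDiff hp hGstab hGgain
  exact ⟨hGK.bijective_id_sub, fun _ hΞ => hGK.isCausal_of_rightInverse hΞ,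
    fun h _ ha _ hy => h.inLp_controller hp.ne' ha hy, hGdiff.closedLoopLpStable hp hGstab⟩

end Stability

/-- Desoer–Chen: for a strictly causal, ℓ_p-stable, incrementally
finite-gain ℓ_p-stable plant `G` and a causal controller `K`, the closed loop is
ℓ_p-stable iff `K ∘ (I − G K)⁻¹` is ℓ_p-stable. -/
theorem statement9 {r m : ℕ} (p : ℝ) (hp : 1 ≤ p)
    (G : Traj m → Traj r) (K : Traj r → Traj m)
    (hG : StrictlyCausal G)
    (hGstab : ∀ u : Traj m, InLp p u → InLp p (G u))
    (hGifg : ∃ γ : ℝ, 0 ≤ γ ∧ ∀ u₁ u₂ : Traj m, InLp p u₁ → InLp p u₂ →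
      lpSeqNorm p (G u₁ - G u₂) ≤ γ * lpSeqNorm p (u₁ - u₂))
    (hK : Causal K) :
    -- I − G K is a bijection of ℓ^r with causal inverse
    Function.Bijective (fun y : Traj r => y - G (K y)) ∧
    (∀ Ξ : Traj r → Traj r,
      (∀ y, Ξ (y - G (K y)) = y) → (∀ a, Ξ a - G (K (Ξ a)) = a) → Causal Ξ) ∧
    -- the closed loop is ℓ_p-stable iff K ∘ (I − G K)⁻¹ is ℓ_p-stable
    ((∀ (v : Traj r) (d : Traj m) (y : Traj r) (u : Traj m),
        y = G u + v → u = K y + d → InLp p v → InLp p d → InLp p y ∧ InLp p u)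
      ↔
      (∀ a : Traj r, InLp p a → ∀ y : Traj r, y = G (K y) + a → InLp p (K y))) := by
  obtain ⟨hbij, hcausal, hiff⟩ :=
    statement9_general (zero_lt_one.trans_le hp) hG hGstab hGifg hK
  exact ⟨hbij, fun Ξ _ hΞ => hcausal Ξ hΞ, hiff⟩
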